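/- arXiv:2410.05888 — 5 statements merged into one kernel-verified Lean document; each statement's English description precedes it below -/
import Mathlib

section
/- Let R be a commutative ring, M an R-module, and C an R-linear relation on M. With C^♯ = C'' ∩ (C⁻¹)'' and C^♭ = C'' ∩ (C⁻¹)' + (C⁻¹)'' ∩ C', we have C^♯ ⊆ CC^♯ (i.e., every m ∈ C^♯ satisfies m ∈ Cm' for some m' ∈ C^♯). -/
variable {R : Type*} [CommRing R] {M : Type*} [AddCommGroup M] [Module R M]

/-- The inverse of a linear relation `C ⊆ M ⊕ M`. -/
def relInv (C : Submodule R (M × M)) : Submodule R (M × M) :=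
  C.comap (LinearEquiv.prodComm R M M).toLinearMap

/-- `C'' = {m : ∃ (mₙ), m₀ = m and mₙ₊₁ ∈ Cmₙ for all n}`. -/
def relDD (C : Submodule R (M × M)) : Set M :=
  {m | ∃ f : ℕ → M, f 0 = m ∧ ∀ n, (f n, f (n + 1)) ∈ C}

/-- `C' = {m : ∃ (mₙ), m₀ = m, mₙ₊₁ ∈ Cmₙ for all n, and mₙ = 0 for n ≫ 0}`. -/
def relD (C : Submodule R (M × M)) : Set M :=
  {m | ∃ f : ℕ → M, f 0 = m ∧ (∀ n, (f n, f (n + 1)) ∈ C) ∧ ∃ N, ∀ n, N ≤ n → f n = 0}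

/-- `C^♯ = C'' ∩ (C⁻¹)''`. -/
def relSharp (C : Submodule R (M × M)) : Set M :=
  relDD C ∩ relDD (relInv C)

/-- `C^♭ = C'' ∩ (C⁻¹)' + (C⁻¹)'' ∩ C'`. -/
def relFlat (C : Submodule R (M × M)) : Set M :=
  {m | ∃ a ∈ relDD C ∩ relD (relInv C), ∃ b ∈ relDD (relInv C) ∩ relD C, m = a + b}

/-- `C^♯ ⊆ CC^♯`: every `m ∈ C^♯` satisfies `m ∈ Cm'` for some `m' ∈ C^♯`. -/
theorem stmt1 (C : Submodule R (M × M)) :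
    ∀ m ∈ relSharp C, ∃ m' ∈ relSharp C, (m', m) ∈ C := by
  rintro _ ⟨⟨f, rfl, hf⟩, g, hg₀, hg⟩
  have hgC : ∀ n, (g (n + 1), g n) ∈ C := fun n => hg n
  have hm : (g 1, f 0) ∈ C := hg₀ ▸ hgC 0
  refine ⟨g 1, ⟨⟨fun n => Nat.casesOn n (g 1) f, rfl, ?_⟩, fun n => g (n + 1), rfl,
    fun n => hg (n + 1)⟩, hm⟩
  rintro (_ | n)
  · exact hm
  · exact hf n
end

section
/- Let R be a commutative ring, M an R-module, and C an R-linear relation on M. Then C^♭ = C^♯ ∩ CC^♭, where CC^♭ = {m ∈ M : ∃ m' ∈ C^♭ with (m', m) ∈ C}. -/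
variable {R : Type*} [CommRing R] {M : Type*} [AddCommGroup M] [Module R M]

theorem mem_relInv {C : Submodule R (M × M)} {x y : M} : (x, y) ∈ relInv C ↔ (y, x) ∈ C :=
  Iff.rfl

theorem relD_subset_relDD (C : Submodule R (M × M)) : relD C ⊆ relDD C :=
  fun _ ⟨f, h0, hf, _⟩ => ⟨f, h0, hf⟩

theorem zero_mem_relD (C : Submodule R (M × M)) : (0 : M) ∈ relD C :=
  ⟨fun _ => 0, rfl, fun _ => C.zero_mem, 0, fun _ _ => rfl⟩

theorem add_mem_relDD {C : Submodule R (M × M)} {x y : M} (hx : x ∈ relDD C)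
    (hy : y ∈ relDD C) : x + y ∈ relDD C := by
  obtain ⟨f, rfl, hf⟩ := hx
  obtain ⟨g, rfl, hg⟩ := hy
  exact ⟨fun n => f n + g n, rfl, fun n => C.add_mem (hf n) (hg n)⟩

theorem sub_mem_relDD {C : Submodule R (M × M)} {x y : M} (hx : x ∈ relDD C)
    (hy : y ∈ relDD C) : x - y ∈ relDD C := by
  obtain ⟨f, rfl, hf⟩ := hx
  obtain ⟨g, rfl, hg⟩ := hy
  exact ⟨fun n => f n - g n, rfl, fun n => C.sub_mem (hf n) (hg n)⟩

theorem add_mem_relD {C : Submodule R (M × M)} {x y : M} (hx : x ∈ relD C)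
    (hy : y ∈ relD C) : x + y ∈ relD C := by
  obtain ⟨f, rfl, hf, N, hN⟩ := hx
  obtain ⟨g, rfl, hg, K, hK⟩ := hy
  refine ⟨fun n => f n + g n, rfl, fun n => C.add_mem (hf n) (hg n), max N K, fun n hn => ?_⟩
  simp [hN n (le_of_max_le_left hn), hK n (le_of_max_le_right hn)]

theorem relDD_of_rel {C : Submodule R (M × M)} {x y : M} (h : (x, y) ∈ C)
    (hy : y ∈ relDD C) : x ∈ relDD C := by
  obtain ⟨f, rfl, hf⟩ := hy
  exact ⟨fun n => Nat.casesOn n x f, rfl, fun n => Nat.casesOn n h hf⟩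

theorem relD_of_rel {C : Submodule R (M × M)} {x y : M} (h : (x, y) ∈ C)
    (hy : y ∈ relD C) : x ∈ relD C := by
  obtain ⟨f, rfl, hf, N, hN⟩ := hy
  refine ⟨fun n => Nat.casesOn n x f, rfl, fun n => Nat.casesOn n h hf, N + 1, fun n hn => ?_⟩
  cases n with
  | zero => omega
  | succ n => exact hN n (by omega)

theorem exists_rel_of_mem_relDD {C : Submodule R (M × M)} {x : M} (hx : x ∈ relDD C) :
    ∃ y ∈ relDD C, (x, y) ∈ C := by
  obtain ⟨f, rfl, hf⟩ := hx
  exact ⟨f 1, ⟨fun n => f (n + 1), rfl, fun n => hf (n + 1)⟩, hf 0⟩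

theorem exists_rel_of_mem_relD {C : Submodule R (M × M)} {x : M} (hx : x ∈ relD C) :
    ∃ y ∈ relD C, (x, y) ∈ C := by
  obtain ⟨f, rfl, hf, N, hN⟩ := hx
  exact ⟨f 1, ⟨fun n => f (n + 1), rfl, fun n => hf (n + 1), N, fun n hn => hN _ (by omega)⟩, hf 0⟩

theorem relFlat_subset_relSharp (C : Submodule R (M × M)) : relFlat C ⊆ relSharp C := by
  rintro _ ⟨a, ⟨ha, ha'⟩, b, ⟨hb, hb'⟩, rfl⟩
  exact ⟨add_mem_relDD ha (relD_subset_relDD C hb'),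
    add_mem_relDD (relD_subset_relDD _ ha') hb⟩

/-- `C^♭ = C^♯ ∩ CC^♭`. -/
theorem stmt2 (C : Submodule R (M × M)) :
    relFlat C = relSharp C ∩ {m | ∃ m' ∈ relFlat C, (m', m) ∈ C} := by
  ext m
  constructor
  · intro hm
    refine ⟨relFlat_subset_relSharp C hm, ?_⟩
    obtain ⟨a, ⟨ha, ha'⟩, b, ⟨hb, hb'⟩, rfl⟩ := hm
    obtain ⟨x, hx, hxa⟩ := exists_rel_of_mem_relD ha'
    obtain ⟨y, hy, hyb⟩ := exists_rel_of_mem_relDD hb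
    rw [mem_relInv] at hxa hyb
    exact ⟨x + y, ⟨x, ⟨relDD_of_rel hxa ha, hx⟩, y, ⟨hy, relD_of_rel hyb hb'⟩, rfl⟩,
      C.add_mem hxa hyb⟩
  · rintro ⟨hm, _, ⟨a, ⟨ha, ha'⟩, b, ⟨hb, hb'⟩, rfl⟩, hC⟩
    obtain ⟨x, hx, hax⟩ := exists_rel_of_mem_relDD ha
    obtain ⟨y, hy, hby⟩ := exists_rel_of_mem_relD hb'
    have hx' : x ∈ relD (relInv C) := relD_of_rel (mem_relInv.2 hax) ha'
    have hy' : y ∈ relDD (relInv C) := relDD_of_rel (mem_relInv.2 hby) hb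
    have hd : ((0 : M), m - (x + y)) ∈ C := by
      simpa using C.sub_mem hC (C.add_mem hax hby)
    have hd₁ : m - (x + y) ∈ relDD C :=
      sub_mem_relDD hm.1 (add_mem_relDD hx (relD_subset_relDD C hy))
    have hd₂ : m - (x + y) ∈ relD (relInv C) :=
      relD_of_rel (mem_relInv.2 hd) (zero_mem_relD _)
    exact ⟨x + (m - (x + y)), ⟨add_mem_relDD hx hd₁, add_mem_relD hx' hd₂⟩, y, ⟨hy', hy⟩,
      by abel⟩
end

section
/- Let R be a commutative ring, L, M R-modules, and f : L → M an R-linear map with the property that (f(x), f(y)) ∈ C whenever (x,y) ∈ B, where B is an R-linear relation on L and C is an R-linear relation on M. Then f(B^♯) ⊆ C^♯ and f(B^♭) ⊆ C^♭, so f induces an R-linear map B^♯/B^♭ → C^♯/C^♭ that intertwines the induced automorphisms: θ_C(f(ℓ) + C^♭) = f(θ_B(ℓ)) + C^♭ for all ℓ ∈ B^♯. -/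
variable {R : Type*} [CommRing R] {M : Type*} [AddCommGroup M] [Module R M]

variable {L : Type*} [AddCommGroup L] [Module R L]

theorem map_mem_relInv {B : Submodule R (L × L)} {C : Submodule R (M × M)} {f : L →ₗ[R] M}
    (hf : ∀ x y : L, (x, y) ∈ B → (f x, f y) ∈ C) (x y : L) (h : (x, y) ∈ relInv B) :
    (f x, f y) ∈ relInv C :=
  hf y x h

theorem map_mem_relDD {B : Submodule R (L × L)} {C : Submodule R (M × M)} {f : L →ₗ[R] M}
    (hf : ∀ x y : L, (x, y) ∈ B → (f x, f y) ∈ C) {x : L} (hx : x ∈ relDD B) :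
    f x ∈ relDD C := by
  obtain ⟨u, rfl, hu⟩ := hx
  exact ⟨fun n => f (u n), rfl, fun n => hf _ _ (hu n)⟩

theorem map_mem_relD {B : Submodule R (L × L)} {C : Submodule R (M × M)} {f : L →ₗ[R] M}
    (hf : ∀ x y : L, (x, y) ∈ B → (f x, f y) ∈ C) {x : L} (hx : x ∈ relD B) :
    f x ∈ relD C := by
  obtain ⟨u, rfl, hu, N, hN⟩ := hx
  exact ⟨fun n => f (u n), rfl, fun n => hf _ _ (hu n), N, fun n hn => by simp [hN n hn]⟩

theorem map_mem_relSharp {B : Submodule R (L × L)} {C : Submodule R (M × M)} {f : L →ₗ[R] M}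
    (hf : ∀ x y : L, (x, y) ∈ B → (f x, f y) ∈ C) {x : L} (hx : x ∈ relSharp B) :
    f x ∈ relSharp C :=
  ⟨map_mem_relDD hf hx.1, map_mem_relDD (map_mem_relInv hf) hx.2⟩

theorem map_mem_relFlat {B : Submodule R (L × L)} {C : Submodule R (M × M)} {f : L →ₗ[R] M}
    (hf : ∀ x y : L, (x, y) ∈ B → (f x, f y) ∈ C) {x : L} (hx : x ∈ relFlat B) :
    f x ∈ relFlat C := by
  obtain ⟨a, ha, b, hb, rfl⟩ := hx
  exact ⟨f a, ⟨map_mem_relDD hf ha.1, map_mem_relD (map_mem_relInv hf) ha.2⟩,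
    f b, ⟨map_mem_relDD (map_mem_relInv hf) hb.1, map_mem_relD hf hb.2⟩, map_add f a b⟩

/-- a linear map compatible with relations `B` and `C` sends `B^♯` into `C^♯`
and `B^♭` into `C^♭`, and the induced map `B^♯/B^♭ → C^♯/C^♭` intertwines the induced
automorphisms `θ_B` and `θ_C` (expressed via their defining characterisation). -/
theorem stmt4 (B : Submodule R (L × L)) (C : Submodule R (M × M))
    (f : L →ₗ[R] M) (hf : ∀ x y : L, (x, y) ∈ B → (f x, f y) ∈ C) :
    (∀ ℓ ∈ relSharp B, f ℓ ∈ relSharp C) ∧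
    (∀ ℓ ∈ relFlat B, f ℓ ∈ relFlat C) ∧
    (∀ ℓ ℓ' : L, ℓ ∈ relSharp B →
      (ℓ' ∈ relSharp B ∧ ∃ a ∈ relFlat B, ∃ b : L, (ℓ, b) ∈ B ∧ ℓ' = a + b) →
      (f ℓ' ∈ relSharp C ∧ ∃ a ∈ relFlat C, ∃ b : M, (f ℓ, b) ∈ C ∧ f ℓ' = a + b)) := by
  refine ⟨fun ℓ => map_mem_relSharp hf, fun ℓ => map_mem_relFlat hf, ?_⟩
  rintro ℓ ℓ' - ⟨hℓ', a, ha, b, hb, rfl⟩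
  exact ⟨map_mem_relSharp hf hℓ', f a, map_mem_relFlat hf ha, f b, hf _ _ hb, map_add f a b⟩
end

section
/- Let R be a commutative ring, M an R-module, C an R-linear relation on M, and I an ideal of R with I·M ⊆ (C⁻¹)' + C'. Then C^♯ ∩ I·M ⊆ C^♭; in particular I annihilates C^♯/C^♭, so C^♯/C^♭ is an R/I-module. -/
variable {R : Type*} [CommRing R] {M : Type*} [AddCommGroup M] [Module R M]

theorem smul_mem_relDD {C : Submodule R (M × M)} (r : R) {x : M} (hx : x ∈ relDD C) :
    r • x ∈ relDD C := by
  obtain ⟨f, rfl, hf⟩ := hx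
  exact ⟨fun n => r • f n, rfl, fun n => C.smul_mem r (hf n)⟩

theorem smul_mem_relSharp {C : Submodule R (M × M)} (r : R) {x : M} (hx : x ∈ relSharp C) :
    r • x ∈ relSharp C :=
  ⟨smul_mem_relDD r hx.1, smul_mem_relDD r hx.2⟩

theorem add_mem_relFlat {C : Submodule R (M × M)} {a b : M} (ha : a ∈ relD (relInv C))
    (hb : b ∈ relD C) (hab : a + b ∈ relSharp C) : a + b ∈ relFlat C := by
  refine ⟨a, ⟨?_, ha⟩, b, ⟨?_, hb⟩, rfl⟩
  · simpa using sub_mem_relDD hab.1 (relD_subset_relDD C hb)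
  · simpa using sub_mem_relDD hab.2 (relD_subset_relDD _ ha)

/-- if `I·M ⊆ (C⁻¹)' + C'` then `C^♯ ∩ I·M ⊆ C^♭`; in particular `I`
annihilates `C^♯/C^♭`. -/
theorem stmt6 (C : Submodule R (M × M)) (I : Ideal R)
    (h : ∀ m : M, m ∈ (I • (⊤ : Submodule R M) : Submodule R M) →
      ∃ a ∈ relD (relInv C), ∃ b ∈ relD C, m = a + b) :
    (∀ m ∈ relSharp C, m ∈ (I • (⊤ : Submodule R M) : Submodule R M) → m ∈ relFlat C) ∧
    (∀ r ∈ I, ∀ m ∈ relSharp C, r • m ∈ relFlat C) := by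
  have key : ∀ m ∈ relSharp C, m ∈ (I • (⊤ : Submodule R M) : Submodule R M) →
      m ∈ relFlat C := by
    intro m hm hmI
    obtain ⟨a, ha, b, hb, rfl⟩ := h m hmI
    exact add_mem_relFlat ha hb hm
  exact ⟨key, fun r hr m hm =>
    key _ (smul_mem_relSharp r hm) (Submodule.smul_mem_smul hr Submodule.mem_top)⟩
end

section
/- Let R be a semisimple commutative ring and (M, C) an R-linear relation. If there exists an R[T,T⁻¹]-module X and an R-linear map ρ : X → M with C^♯ = C^♭ + im(ρ), ρ(Tx) ∈ Cρ(x) for all x ∈ X, and ρ⁻¹(C^♭) = rad(X) (= 0 since R is semisimple), then C^♯ = C^♭ ⊕ Y for an R[T,T⁻¹]-submodule structure on Y = im(ρ) such that for y, z ∈ Y, Ty = z if and only if z ∈ Cy. -/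
variable {R : Type*} [CommRing R] {M : Type*} [AddCommGroup M] [Module R M]

theorem zero_mem_relDD (C : Submodule R (M × M)) : (0 : M) ∈ relDD C :=
  ⟨fun _ => 0, rfl, fun _ => C.zero_mem⟩

/-- If `z ∈ C0` and `z ∈ C''`, then `z ∈ C^♭`. -/
theorem mem_relFlat_of_zero_mem (C : Submodule R (M × M)) {z : M}
    (h : z ∈ relDD C) (h0 : ((0 : M), z) ∈ C) : z ∈ relFlat C := by
  refine ⟨z, ⟨h, fun n => if n = 0 then z else 0, rfl, fun n => ?_, 1, fun n hn => ?_⟩,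
    0, ⟨zero_mem_relDD _, zero_mem_relD _⟩, (add_zero z).symm⟩
  · rcases n with _ | n
    · simpa [relInv] using h0
    · exact (relInv C).zero_mem
  · simp [Nat.one_le_iff_ne_zero.mp hn]

/-- over a semisimple commutative ring, a reduction `(X ∣ ρ)` of `(M, C)`
meeting in the radical (`ρ⁻¹(C^♭) = rad X = 0`) yields `C^♯ = C^♭ ⊕ Y` with
`Y = im ρ` an `R[T,T⁻¹]`-module (via `ρ`) such that `Ty = z` iff `z ∈ Cy`. -/
theorem stmt13 [IsSemisimpleRing R] (C : Submodule R (M × M))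
    (X : Type*) [AddCommGroup X] [Module R X]
    [Module (LaurentPolynomial R) X] [IsScalarTower R (LaurentPolynomial R) X]
    (ρ : X →ₗ[R] M)
    (hsharp : relSharp C = {m | ∃ a ∈ relFlat C, ∃ x : X, m = a + ρ x})
    (hT : ∀ x : X, (ρ x, ρ ((LaurentPolynomial.T 1 : LaurentPolynomial R) • x)) ∈ C)
    (hrad : ∀ x : X, ρ x ∈ relFlat C → x = 0) :
    Function.Injective ρ ∧
    (∀ a ∈ relFlat C, ∀ x : X, a + ρ x = 0 → a = 0 ∧ ρ x = 0) ∧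
    (∀ (x : X) (z : M),
      (z ∈ Set.range ρ ∧ (ρ x, z) ∈ C) ↔
        z = ρ ((LaurentPolynomial.T 1 : LaurentPolynomial R) • x)) := by
  have zero_flat : (0 : M) ∈ relFlat C :=
    mem_relFlat_of_zero_mem C (zero_mem_relDD C) C.zero_mem
  have hinj : Function.Injective ρ := (injective_iff_map_eq_zero ρ).2 fun x hx =>
    hrad x (hx ▸ zero_flat)
  refine ⟨hinj, fun a ha x hax => ?_, fun x z => ⟨?_, ?_⟩⟩
  · have hneg : a = ρ (-x) := by rw [map_neg]; exact eq_neg_of_add_eq_zero_left hax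
    have hx : x = 0 := neg_eq_zero.mp (hrad (-x) (hneg ▸ ha))
    subst hx
    simpa using hax
  · rintro ⟨⟨w, rfl⟩, hw⟩
    have h0 : ((0 : M), ρ (w - (LaurentPolynomial.T 1 : LaurentPolynomial R) • x)) ∈ C := by
      simpa using C.sub_mem hw (hT x)
    have hDD : ∀ y : X, ρ y ∈ relDD C := fun y =>
      ⟨fun n => ρ (((LaurentPolynomial.T 1 : LaurentPolynomial R) • ·)^[n] y), rfl, fun n => by
        simpa only [Function.iterate_succ_apply'] using hT _⟩
    rw [sub_eq_zero.mp (hrad _ (mem_relFlat_of_zero_mem C (hDD _) h0))]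
  · rintro rfl
    exact ⟨⟨_, rfl⟩, hT x⟩
end
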